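/- Let (X, Y) be jointly Gaussian real random variables with means μ₁, μ₂, variances σ₁² , σ₂² > 0 and covariance λ. Then the conditional distribution of X given Y = z is normal with mean μ₁ + (z − μ₂)λ/σ₂² and variance σ₁² − λ²/σ₂². -/

import Mathlib

open MeasureTheory ProbabilityTheory Real

/-- `(X, Y)` is a bivariate Gaussian vector with means `μ₁, μ₂`, variances `σ₁², σ₂²`
and covariance `λ`: every linear combination is Gaussian with the induced parameters. -/
def IsBivariateGaussian {Ω : Type*} [MeasurableSpace Ω] (P : Measure Ω)
    (X Y : Ω → ℝ) (μ₁ μ₂ v₁ v₂ lam : ℝ) : Prop :=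
  ∀ a b : ℝ, Measure.map (fun ω => a * X ω + b * Y ω) P =
    gaussianReal (a * μ₁ + b * μ₂)
      (Real.toNNReal (a ^ 2 * v₁ + 2 * a * b * lam + b ^ 2 * v₂))

/-!
The residual `Z = X - (λ / σ₂²) Y` is jointly Gaussian with `Y` and uncorrelated with it, hence
independent of it. Freezing `Y = z` in `X = Z + (λ / σ₂²) Y` therefore leaves the law of `Z`
unchanged and only translates it by `(λ / σ₂²) z`.
-/

section CondDistrib

variable {α β γ δ : Type*} [MeasurableSpace α] [MeasurableSpace β] [MeasurableSpace γ]
  [MeasurableSpace δ]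

lemma map_prod_prodMk_fst_eq_compProd {μ : Measure α} {ν : Measure β} [SFinite μ] [SFinite ν]
    {f : α × β → γ} (hf : Measurable f) {κ : Kernel α γ} [IsSFiniteKernel κ]
    (hκ : ∀ x, κ x = ν.map fun y ↦ f (x, y)) :
    (μ.prod ν).map (fun p ↦ (p.1, f p)) = μ ⊗ₘ κ := by
  have hg : Measurable fun p : α × β ↦ (p.1, f p) := by fun_prop
  ext s hs
  rw [Measure.map_apply hg hs, Measure.prod_apply (hg hs), Measure.compProd_apply hs]
  refine lintegral_congr fun x ↦ ?_
  rw [hκ, Measure.map_apply (by fun_prop) (measurable_prodMk_left hs)]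
  rfl

lemma condDistrib_ae_eq_map_of_indepFun [StandardBorelSpace δ] [Nonempty δ] {P : Measure α}
    [IsFiniteMeasure P] {Y : α → β} {Z : α → γ} (hY : AEMeasurable Y P) (hZ : AEMeasurable Z P)
    (hYZ : IndepFun Y Z P) {f : β × γ → δ} (hf : Measurable f) :
    ∀ᵐ y ∂P.map Y, condDistrib (fun ω ↦ f (Y ω, Z ω)) Y P y =
      (P.map Z).map fun z ↦ f (y, z) := by
  let κ : Kernel β δ := (Kernel.id ×ₖ Kernel.const β (P.map Z)).map f
  have hκ (y : β) : κ y = (P.map Z).map fun z ↦ f (y, z) := by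
    rw [Kernel.map_apply _ hf, Kernel.prod_apply, Kernel.id_apply, Kernel.const_apply,
      Measure.dirac_prod, Measure.map_map hf measurable_prodMk_left]
    rfl
  have hjoint : P.map (fun ω ↦ (Y ω, f (Y ω, Z ω))) = P.map Y ⊗ₘ κ := by
    rw [← map_prod_prodMk_fst_eq_compProd hf hκ,
      ← (indepFun_iff_map_prod_eq_prod_map_map hY hZ).1 hYZ,
      AEMeasurable.map_map_of_aemeasurable (by fun_prop) (hY.prodMk hZ)]
    rfl
  filter_upwards [condDistrib_ae_eq_of_measure_eq_compProd Y (by fun_prop) hjoint] with y hy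
  rw [hy, hκ]

end CondDistrib

namespace IsBivariateGaussian

variable {Ω : Type*} [MeasurableSpace Ω] {P : Measure Ω} {X Y : Ω → ℝ} {μ₁ μ₂ v₁ v₂ lam : ℝ}

lemma hasLaw_linearCombination (h : IsBivariateGaussian P X Y μ₁ μ₂ v₁ v₂ lam) (a b : ℝ) :
    HasLaw (fun ω ↦ a * X ω + b * Y ω)
      (gaussianReal (a * μ₁ + b * μ₂) (a ^ 2 * v₁ + 2 * a * b * lam + b ^ 2 * v₂).toNNReal) P where
  aemeasurable := .of_map_ne_zero (by rw [h a b]; exact IsProbabilityMeasure.ne_zero _)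
  map_eq := h a b

lemma hasLaw_fst (h : IsBivariateGaussian P X Y μ₁ μ₂ v₁ v₂ lam) :
    HasLaw X (gaussianReal μ₁ v₁.toNNReal) P := by
  simpa using h.hasLaw_linearCombination 1 0

lemma hasLaw_snd (h : IsBivariateGaussian P X Y μ₁ μ₂ v₁ v₂ lam) :
    HasLaw Y (gaussianReal μ₂ v₂.toNNReal) P := by
  simpa using h.hasLaw_linearCombination 0 1

lemma hasGaussianLaw (h : IsBivariateGaussian P X Y μ₁ μ₂ v₁ v₂ lam) :
    HasGaussianLaw (fun ω ↦ (X ω, Y ω)) P where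
  isGaussian_map := isGaussian_of_map_eq_gaussianReal fun L ↦ by
    have hL (x y : ℝ) : L (x, y) = L (1, 0) * x + L (0, 1) * y := by
      have hxy : ((x, y) : ℝ × ℝ) = x • (1, 0) + y • (0, 1) := by simp
      rw [hxy, map_add, map_smul, map_smul, smul_eq_mul, smul_eq_mul, mul_comm x, mul_comm y]
    refine ⟨_, _, Eq.trans ?_ (h (L (1, 0)) (L (0, 1)))⟩
    rw [AEMeasurable.map_map_of_aemeasurable (by fun_prop)
      (h.hasLaw_fst.aemeasurable.prodMk h.hasLaw_snd.aemeasurable)]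
    exact congrArg (Measure.map · P) (funext fun ω ↦ hL (X ω) (Y ω))

lemma sub_const_mul_left (h : IsBivariateGaussian P X Y μ₁ μ₂ v₁ v₂ lam) (c : ℝ) :
    IsBivariateGaussian P (fun ω ↦ X ω - c * Y ω) Y (μ₁ - c * μ₂) μ₂
      (v₁ - 2 * c * lam + c ^ 2 * v₂) v₂ (lam - c * v₂) := fun a b ↦ by
  convert h a (b - a * c) using 2
  · ext ω
    ring
  · ring
  · congr 1
    ring

-- `Real.toNNReal` truncates, so the parameters need not be moments of `(X, Y)`. What survives is
-- `Var[X + Y] = Var[X - Y]`, where the covariance enters with opposite signs.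
lemma covariance_eq_zero (h : IsBivariateGaussian P X Y μ₁ μ₂ v₁ v₂ 0) : cov[X, Y; P] = 0 := by
  have hX := h.hasGaussianLaw.fst.memLp_two
  have hY := h.hasGaussianLaw.snd.memLp_two
  have : IsProbabilityMeasure P := h.hasGaussianLaw.isProbabilityMeasure
  have hadd : Var[fun ω ↦ X ω + Y ω; P] = (v₁ + v₂).toNNReal := by
    simpa using (h.hasLaw_linearCombination 1 1).variance_eq
  have hsub : Var[fun ω ↦ X ω - Y ω; P] = (v₁ + v₂).toNNReal := by
    simpa [sub_eq_add_neg] using (h.hasLaw_linearCombination 1 (-1)).variance_eq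
  rw [variance_fun_add hX hY] at hadd
  rw [variance_fun_sub hX hY] at hsub
  linarith

lemma indepFun (h : IsBivariateGaussian P X Y μ₁ μ₂ v₁ v₂ 0) : IndepFun X Y P :=
  h.hasGaussianLaw.indepFun_of_covariance_eq_zero h.covariance_eq_zero

lemma regression_residual (h : IsBivariateGaussian P X Y μ₁ μ₂ v₁ v₂ lam) (hv₂ : v₂ ≠ 0) :
    IsBivariateGaussian P (fun ω ↦ X ω - lam / v₂ * Y ω) Y (μ₁ - lam / v₂ * μ₂) μ₂
      (v₁ - lam ^ 2 / v₂) v₂ 0 := by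
  convert h.sub_const_mul_left (lam / v₂) using 1 <;> field_simp <;> ring

end IsBivariateGaussian

theorem bivariate_gaussian_condDistrib_general
    {Ω : Type*} [MeasurableSpace Ω] {P : Measure Ω} [IsFiniteMeasure P] {X Y : Ω → ℝ}
    {μ₁ μ₂ v₁ v₂ lam : ℝ} (hv₂ : 0 < v₂)
    (hXY : IsBivariateGaussian P X Y μ₁ μ₂ v₁ v₂ lam) :
    ∀ᵐ ω ∂P, condDistrib X Y P (Y ω) =
      gaussianReal (μ₁ + (Y ω - μ₂) * lam / v₂) (v₁ - lam ^ 2 / v₂).toNNReal := by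
  let Z : Ω → ℝ := fun ω ↦ X ω - lam / v₂ * Y ω
  have hZY := hXY.regression_residual hv₂.ne'
  have hZ : HasLaw Z _ P := hZY.hasLaw_fst
  have hY := hZY.hasLaw_snd.aemeasurable
  have hcond := condDistrib_ae_eq_map_of_indepFun hY hZ.aemeasurable hZY.indepFun.symm
    (f := fun p ↦ p.2 + lam / v₂ * p.1) (by fun_prop)
  filter_upwards [ae_of_ae_map hY hcond] with ω hω
  simp only [Z, sub_add_cancel] at hω
  rw [hω, hZ.map_eq, gaussianReal_map_add_const]
  congr 1
  ring

theorem bivariate_gaussian_condDistrib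
    {Ω : Type*} [MeasurableSpace Ω] [StandardBorelSpace Ω] [Nonempty Ω]
    (P : Measure Ω) [IsProbabilityMeasure P]
    (X Y : Ω → ℝ) (hXm : Measurable X) (hYm : Measurable Y)
    (μ₁ μ₂ σ₁ σ₂ lam : ℝ) (hσ₁ : 0 < σ₁) (hσ₂ : 0 < σ₂)
    (hXY : IsBivariateGaussian P X Y μ₁ μ₂ (σ₁ ^ 2) (σ₂ ^ 2) lam) :
    ∀ᵐ ω ∂P, (condDistrib X Y P) (Y ω) =
      gaussianReal (μ₁ + (Y ω - μ₂) * lam / σ₂ ^ 2)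
        (Real.toNNReal (σ₁ ^ 2 - lam ^ 2 / σ₂ ^ 2)) := by
  exact bivariate_gaussian_condDistrib_general (pow_pos hσ₂ 2) hXY
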